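/- Let A be a k-algebra with an exhaustive ℕ-indexed filtration Λ such that the associated graded algebra gr_Λ A has the property that every graded subalgebra is finitely generated and noetherian. Then every k-subalgebra of A is finitely generated and noetherian. -/

import Mathlib

/-!
Every `k`-submodule `M` of `A` has an associated graded submodule `gr M` of `gr A`, spanned by the
leading symbols of the elements of `M`. If `M ≤ N` and `gr M = gr N`, every element of `N` can be
corrected by elements of `M` with the same leading symbol, lowering its degree each time, until
nothing is left; so `gr` is strictly monotone. Hence a strictly ascending chain of left ideals of a
subalgebra `R` gives one of left ideals of `gr R`, and a subalgebra of `R` whose associated graded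
contains generators of `gr R` must be all of `R`.
-/

open DirectSum

section AssociatedGraded

variable {ι k A B : Type*} [DecidableEq ι] [Semiring k] [AddCommMonoid A] [Module k A]
  [AddCommMonoid B] [Module k B] {Λ : ι → Submodule k A} {ℬ : ι → Submodule k B}
  [Decomposition ℬ] (σ : ∀ i, Λ i →ₗ[k] ℬ i)

/-- The associated graded submodule `gr M` of a submodule `M` of a filtered module, with respect to
symbol maps `σ i : Λ i → ℬ i`. Thinking of `ℬ i` as `Λ i / Λ_{<i}`, its degree `i` part is the image
of `M ∩ Λ i`. -/
def associatedGraded (M : Submodule k A) : Submodule k B :=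
  ⨅ i, (((M.comap (Λ i).subtype).map (σ i)).comap (component k ι (fun i => ℬ i) i)).comap
    (decomposeLinearEquiv ℬ).toLinearMap

variable {σ} {M N : Submodule k A}

theorem mem_associatedGraded {x : B} :
    x ∈ associatedGraded σ M ↔ ∀ i, ∃ a : Λ i, (a : A) ∈ M ∧ σ i a = decompose ℬ x i := by
  simp only [associatedGraded, Submodule.mem_iInf]
  rfl

theorem associatedGraded_mono : Monotone (associatedGraded σ) := fun _ _ hMN _ hx =>
  mem_associatedGraded.2 fun i =>
    let ⟨a, ha, hax⟩ := mem_associatedGraded.1 hx i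
    ⟨a, hMN ha, hax⟩

theorem symbol_mem_associatedGraded {i : ι} {a : Λ i} (ha : (a : A) ∈ M) :
    (σ i a : B) ∈ associatedGraded σ M := by
  refine mem_associatedGraded.2 fun j => ?_
  rw [decompose_coe]
  obtain rfl | hij := eq_or_ne i j
  · exact ⟨a, ha, (of_eq_same (β := fun i => ℬ i) i _).symm⟩
  · exact ⟨0, M.zero_mem, by rw [map_zero, of_eq_of_ne _ _ _ hij.symm]⟩

theorem exists_mem_symbol_eq {i : ι} {b : ℬ i} (hb : (b : B) ∈ associatedGraded σ M) :
    ∃ a : Λ i, (a : A) ∈ M ∧ σ i a = b := by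
  simpa only [decompose_coe, of_eq_same] using mem_associatedGraded.1 hb i

theorem isHomogeneous_associatedGraded : SetLike.IsHomogeneous ℬ (associatedGraded σ M) := by
  intro i x hx
  obtain ⟨a, ha, hax⟩ := mem_associatedGraded.1 hx i
  exact hax ▸ symbol_mem_associatedGraded ha

theorem exists_fg_le_mem_associatedGraded {x : B} (hx : x ∈ associatedGraded σ M) :
    ∃ N ≤ M, N.FG ∧ x ∈ associatedGraded σ N := by
  classical
  choose a haM hax using mem_associatedGraded.1 hx
  let T : Finset A := (decompose ℬ x).support.image fun i => (a i : A)
  have hTM : (T : Set A) ⊆ M := by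
    simpa [T, Set.subset_def] using fun i _ => haM i
  refine ⟨Submodule.span k T, Submodule.span_le.2 hTM, ⟨T, rfl⟩, ?_⟩
  rw [← sum_support_decompose ℬ x]
  refine Submodule.sum_mem _ fun i hi => ?_
  rw [← hax]
  exact symbol_mem_associatedGraded (Submodule.subset_span (Finset.mem_image_of_mem _ hi))

theorem exists_fg_le_subset_associatedGraded {s : Finset B}
    (hs : (s : Set B) ⊆ associatedGraded σ M) :
    ∃ N ≤ M, N.FG ∧ (s : Set B) ⊆ associatedGraded σ N := by
  choose! N hNM hfg hmem using fun x (hx : x ∈ s) => exists_fg_le_mem_associatedGraded (hs hx)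
  exact ⟨⨆ x ∈ s, N x, iSup₂_le hNM, Submodule.fg_biSup s N hfg, fun x hx =>
    associatedGraded_mono (le_iSup₂ (f := fun x _ => N x) x hx) (hmem x hx)⟩

end AssociatedGraded

section Strict

variable {ι k A B : Type*} [LinearOrder ι] [WellFoundedLT ι] [Ring k] [AddCommGroup A] [Module k A]
  [AddCommGroup B] [Module k B] {Λ : ι → Submodule k A} {ℬ : ι → Submodule k B}
  [Decomposition ℬ] {σ : ∀ i, Λ i →ₗ[k] ℬ i}

theorem inf_le_of_associatedGraded_le (hmono : Monotone Λ)
    (hker : ∀ i, LinearMap.ker (σ i) ≤ (⨆ j, ⨆ _ : j < i, Λ j).comap (Λ i).subtype)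
    {M N : Submodule k A} (hMN : M ≤ N) (hgr : associatedGraded σ N ≤ associatedGraded σ M)
    (i : ι) : N ⊓ Λ i ≤ M := by
  induction i using WellFoundedLT.induction with
  | ind i ih =>
    have hlt : N ⊓ ⨆ j, ⨆ _ : j < i, Λ j ≤ M := by
      have hdir : Directed (· ≤ ·) fun j : {j // j < i} => Λ j :=
        (hmono.comp (Subtype.mono_coe _)).directed_le
      rw [iSup_subtype', hdir.inf_iSup_eq]
      exact iSup_le fun j => ih j j.2
    rintro x ⟨hxN, hxi⟩
    obtain ⟨m, hmM, hmx⟩ :=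
      exists_mem_symbol_eq (hgr (symbol_mem_associatedGraded (σ := σ) (a := ⟨x, hxi⟩) hxN))
    have hsub : x - m ∈ ⨆ j, ⨆ _ : j < i, Λ j := hker i (LinearMap.sub_mem_ker_iff.2 hmx.symm)
    exact (M.sub_mem_iff_left hmM).1 (hlt ⟨N.sub_mem hxN (hMN hmM), hsub⟩)

theorem associatedGraded_strictMono (hmono : Monotone Λ) (hexh : ⨆ i, Λ i = ⊤)
    (hker : ∀ i, LinearMap.ker (σ i) ≤ (⨆ j, ⨆ _ : j < i, Λ j).comap (Λ i).subtype) :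
    StrictMono (associatedGraded σ) := by
  refine fun M N hMN => (associatedGraded_mono hMN.le).lt_of_not_ge fun hgr => hMN.not_ge ?_
  calc N = ⨆ i, N ⊓ Λ i := by rw [← hmono.directed_le.inf_iSup_eq, hexh, inf_top_eq]
    _ ≤ M := iSup_le (inf_le_of_associatedGraded_le hmono hker hMN.le hgr)

end Strict

section Multiplicative

variable {ι k A B : Type*} [AddMonoid ι] [CommSemiring k] [Semiring A] [Algebra k A]
  [Semiring B] [Algebra k B] {Λ : ι → Submodule k A} [SetLike.GradedMonoid Λ]
  {ℬ : ι → Submodule k B}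

/-- Symbol maps `σ i : Λ i → ℬ i` that respect the unit and the products `Λ i × Λ j → Λ (i + j)`,
as the canonical maps from a filtered algebra to its associated graded algebra do. -/
structure IsMultiplicativeSymbol (σ : ∀ i, Λ i →ₗ[k] ℬ i) : Prop where
  map_one : (σ 0 ⟨1, SetLike.one_mem_graded Λ⟩ : B) = 1
  map_mul {i j : ι} (a : Λ i) (b : Λ j) :
    (σ (i + j) ⟨a * b, SetLike.mul_mem_graded a.2 b.2⟩ : B) = σ i a * σ j b

variable [DecidableEq ι] [GradedAlgebra ℬ] {σ : ∀ i, Λ i →ₗ[k] ℬ i}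

namespace IsMultiplicativeSymbol

theorem mul_mem_associatedGraded (hσ : IsMultiplicativeSymbol σ) {M N : Submodule k A} {x y : B}
    (hx : x ∈ associatedGraded σ M) (hy : y ∈ associatedGraded σ N) :
    x * y ∈ associatedGraded σ (M * N) := by
  classical
  rw [← sum_support_decompose ℬ x, ← sum_support_decompose ℬ y, Finset.sum_mul_sum]
  refine Submodule.sum_mem _ fun i _ => Submodule.sum_mem _ fun j _ => ?_
  obtain ⟨a, ha, hax⟩ := mem_associatedGraded.1 hx i
  obtain ⟨b, hb, hby⟩ := mem_associatedGraded.1 hy j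
  rw [← hax, ← hby, ← hσ.map_mul]
  exact symbol_mem_associatedGraded (Submodule.mul_mem_mul ha hb)

/-- The associated graded algebra `gr R` of a subalgebra `R` of a filtered algebra, as a subalgebra
of `gr A`. -/
def grSubalgebra (hσ : IsMultiplicativeSymbol σ) (R : Subalgebra k A) : Subalgebra k B :=
  (associatedGraded σ R.toSubmodule).toSubalgebra
    (hσ.map_one ▸ symbol_mem_associatedGraded R.one_mem)
    fun _ _ hx hy => R.isIdempotentElem_toSubmodule.eq ▸ hσ.mul_mem_associatedGraded hx hy

theorem decompose_mem_grSubalgebra (hσ : IsMultiplicativeSymbol σ) (R : Subalgebra k A) {x : B}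
    (hx : x ∈ hσ.grSubalgebra R) (i : ι) : (decompose ℬ x i : B) ∈ hσ.grSubalgebra R :=
  isHomogeneous_associatedGraded i hx

/-- The associated graded left ideal `gr I` of a left ideal `I` of a subalgebra `R` of a filtered
algebra: the elements of `gr R` that lie in the associated graded of `I`, regarded as a submodule
of `A`. -/
def grIdeal (hσ : IsMultiplicativeSymbol σ) {R : Subalgebra k A} (I : Ideal R) :
    Ideal (hσ.grSubalgebra R) where
  __ := (associatedGraded σ ((I.restrictScalars k).map R.val.toLinearMap)).comap
    (hσ.grSubalgebra R).val.toLinearMap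
  smul_mem' x y hy := by
    have hRI : R.toSubmodule * (I.restrictScalars k).map R.val.toLinearMap ≤
        (I.restrictScalars k).map R.val.toLinearMap := by
      rw [Submodule.mul_le]
      rintro r hr _ ⟨a, ha, rfl⟩
      exact ⟨⟨r, hr⟩ * a, I.mul_mem_left _ ha, rfl⟩
    exact associatedGraded_mono hRI (hσ.mul_mem_associatedGraded x.2 hy)

theorem grIdeal_strictMono (hσ : IsMultiplicativeSymbol σ) (R : Subalgebra k A)
    (hgr : StrictMono (associatedGraded σ)) : StrictMono (hσ.grIdeal (R := R)) := by
  intro I J hIJ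
  have hlt : (I.restrictScalars k).map R.val.toLinearMap <
      (J.restrictScalars k).map R.val.toLinearMap :=
    Submodule.map_strictMono_of_injective Subtype.val_injective hIJ
  have hJR : (J.restrictScalars k).map R.val.toLinearMap ≤ R.toSubmodule := by
    rintro _ ⟨r, -, rfl⟩
    exact r.2
  obtain ⟨hle, x, hxJ, hxI⟩ := SetLike.lt_iff_le_and_exists.1 (hgr hlt)
  exact SetLike.lt_iff_le_and_exists.2
    ⟨fun y hy => hle hy, ⟨x, associatedGraded_mono hJR hxJ⟩, hxJ, hxI⟩

theorem isNoetherianRing_of_grSubalgebra (hσ : IsMultiplicativeSymbol σ) {R : Subalgebra k A}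
    (hgr : StrictMono (associatedGraded σ)) (hR : IsNoetherianRing (hσ.grSubalgebra R)) :
    IsNoetherianRing R :=
  have : WellFoundedGT (Ideal (hσ.grSubalgebra R)) := isNoetherian_iff'.1 hR
  isNoetherian_iff'.2 (hσ.grIdeal_strictMono R hgr).wellFoundedGT

theorem fg_of_fg_grSubalgebra (hσ : IsMultiplicativeSymbol σ) {R : Subalgebra k A}
    (hgr : StrictMono (associatedGraded σ)) (hR : (hσ.grSubalgebra R).FG) : R.FG := by
  obtain ⟨s, hs⟩ := hR
  have hsR : (s : Set B) ⊆ hσ.grSubalgebra R := hs ▸ Algebra.subset_adjoin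
  obtain ⟨_, hTR, ⟨T, rfl⟩, hsT⟩ := exists_fg_le_subset_associatedGraded hsR
  have hle : Algebra.adjoin k (T : Set A) ≤ R := Algebra.adjoin_le (Submodule.span_le.1 hTR)
  have hgr_le : hσ.grSubalgebra R ≤ hσ.grSubalgebra (Algebra.adjoin k (T : Set A)) :=
    hs ▸ Algebra.adjoin_le fun x hx =>
      associatedGraded_mono (Algebra.span_le_adjoin k (T : Set A)) (hsT hx)
  exact ⟨T, hle.eq_of_not_lt fun hlt => (hgr hlt).not_ge hgr_le⟩

end IsMultiplicativeSymbol

end Multiplicative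

theorem supernoetherian_of_gr_graded_supernoetherian_general
    {ι k A B : Type*} [AddMonoid ι] [LinearOrder ι] [WellFoundedLT ι]
    [CommRing k] [Ring A] [Algebra k A] [Ring B] [Algebra k B]
    (Λ : ι → Submodule k A) (hmono : Monotone Λ) (hexh : ⨆ i, Λ i = ⊤)
    (hone : (1 : A) ∈ Λ 0) (hmul : ∀ i j, ∀ a ∈ Λ i, ∀ b ∈ Λ j, a * b ∈ Λ (i + j))
    (ℬ : ι → Submodule k B) [GradedAlgebra ℬ]
    (e : ∀ i : ι,
      ((Λ i) ⧸ (Submodule.comap (Λ i).subtype (⨆ j, ⨆ _ : j < i, Λ j))) ≃ₗ[k] ℬ i)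
    (he1 : (e 0 (Submodule.Quotient.mk ⟨1, hone⟩) : B) = 1)
    (hemul : ∀ (i j : ι) (a : Λ i) (b : Λ j),
      (e (i + j) (Submodule.Quotient.mk ⟨(a : A) * (b : A), hmul i j a a.2 b b.2⟩) : B) =
        (e i (Submodule.Quotient.mk a) : B) * (e j (Submodule.Quotient.mk b) : B))
    (hsup : ∀ S : Subalgebra k B,
      (∀ x ∈ S, ∀ i, (decompose ℬ x i : B) ∈ S) → S.FG ∧ IsNoetherianRing S)
    (R : Subalgebra k A) : R.FG ∧ IsNoetherianRing R := by
  have : SetLike.GradedMonoid Λ :=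
    { one_mem := hone, mul_mem := fun i j a b ha hb => hmul i j a ha b hb }
  let σ (i : ι) : Λ i →ₗ[k] ℬ i := (e i).toLinearMap ∘ₗ Submodule.mkQ _
  have hσ : IsMultiplicativeSymbol σ := ⟨he1, hemul _ _⟩
  have hker (i : ι) : LinearMap.ker (σ i) ≤ (⨆ j, ⨆ _ : j < i, Λ j).comap (Λ i).subtype := by
    rw [LinearEquiv.ker_comp, Submodule.ker_mkQ]
  have hgr : StrictMono (associatedGraded σ) := associatedGraded_strictMono hmono hexh hker
  obtain ⟨hfg, hnoeth⟩ := hsup (hσ.grSubalgebra R) fun _ => hσ.decompose_mem_grSubalgebra R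
  exact ⟨hσ.fg_of_fg_grSubalgebra hgr hfg, hσ.isNoetherianRing_of_grSubalgebra hgr hnoeth⟩

/-- Let `A` be a `k`-algebra with an exhaustive ℕ-indexed filtration `Λ` whose
associated graded algebra (presented here as an ℕ-graded `k`-algebra `B` with grading `ℬ`,
together with the canonical degreewise linear isomorphisms `e`, compatible with multiplication
and the unit) has the property that every graded subalgebra is finitely generated and
noetherian.  Then every `k`-subalgebra of `A` is finitely generated and noetherian. -/
theorem supernoetherian_of_gr_graded_supernoetherian
    (k A B : Type*) [Field k] [Ring A] [Algebra k A] [Ring B] [Algebra k B]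
    (Λ : ℕ → Submodule k A) (hmono : Monotone Λ) (hexh : ⨆ i, Λ i = ⊤)
    (hone : (1 : A) ∈ Λ 0) (hmul : ∀ i j, ∀ a ∈ Λ i, ∀ b ∈ Λ j, a * b ∈ Λ (i + j))
    (ℬ : ℕ → Submodule k B) [GradedAlgebra ℬ]
    -- `B` is the associated graded algebra of the filtration `Λ`:
    (e : ∀ i : ℕ,
      ((Λ i) ⧸ (Submodule.comap (Λ i).subtype (⨆ j, ⨆ _ : j < i, Λ j))) ≃ₗ[k] ℬ i)
    (he1 : (e 0 (Submodule.Quotient.mk ⟨1, hone⟩) : B) = 1)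
    (hemul : ∀ (i j : ℕ) (a : Λ i) (b : Λ j),
      (e (i + j) (Submodule.Quotient.mk ⟨(a : A) * (b : A), hmul i j a a.2 b b.2⟩) : B) =
        (e i (Submodule.Quotient.mk a) : B) * (e j (Submodule.Quotient.mk b) : B))
    -- every graded subalgebra of `B = gr A` is finitely generated and noetherian:
    (hsup : ∀ S : Subalgebra k B,
      (∀ x ∈ S, ∀ i, (DirectSum.decompose ℬ x i : B) ∈ S) → S.FG ∧ IsNoetherianRing S) :
    ∀ R : Subalgebra k A, R.FG ∧ IsNoetherianRing R :=
  supernoetherian_of_gr_graded_supernoetherian_general Λ hmono hexh hone hmul ℬ e he1 hemul hsup
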